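/- arXiv:2102.06620 — 2 statements merged into one kernel-verified Lean document; each statement's English description precedes it below -/
import Mathlib

section
/- Let 𝒯 and 𝒳 be complete separable metric spaces, let 0 be a distinguished point of 𝒳, let E = 𝒯×𝒳 carry the sum metric, and let F = 𝒯×{0}. Let λ be a finite Borel measure on 𝒯, and let ν_n (n ≥ 1) and μ be Borel measures on 𝒳 with ν_n({x : d(0,x) ≥ r}) < ∞ and μ({x : d(0,x) ≥ r}) < ∞ for all r > 0, such that ∫ h dν_n → ∫ h dμ for every bounded continuous h : 𝒳 → ℝ vanishing on B(0,r) for some r > 0. Then for every integer k ≥ 1 and every bounded continuous f : E^k → ℝ for which there exists r > 0 such that f(z_1,…,z_k) = 0 whenever some coordinate z_i = (t_i,x_i) has d(0,x_i) < r, one has ∫ f d(λ⊗ν_n)^{⊗k} → ∫ f d(λ⊗μ)^{⊗k} as n → ∞. -/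
open MeasureTheory Filter Metric Topology

/-!
A test function on `E^k` vanishing as soon as one coordinate has `d(0, x_i) < r` does not see the
difference between `ν` and `w ν`, where `w` is a continuous cutoff equal to `1` on `{r ≤ d(0, x)}`
and to `0` on `B(0, r / 2)`. The measures `w ν_n` are finite and converge weakly to `w μ`, and both
`λ ⊗ ·` and the tensor power are weakly continuous on finite measures; for the latter one
normalizes each factor to a probability measure, the limit being trivial if a factor vanishes.
-/

open scoped BoundedContinuousFunction NNReal

section PiMeasure

variable {ι : Type*} [Fintype ι] {α : ι → Type*} [∀ i, MeasurableSpace (α i)]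
  {m m' : ∀ i, Measure (α i)}

theorem measurePi_mono (h : ∀ i, m i ≤ m' i) : Measure.pi m ≤ Measure.pi m' := by
  have outer_le : OuterMeasure.pi (fun i => (m i).toOuterMeasure) ≤
      OuterMeasure.pi fun i => (m' i).toOuterMeasure :=
    OuterMeasure.le_pi.2 fun s _ =>
      (OuterMeasure.pi_pi_le _ s).trans (Finset.prod_le_prod' fun i _ => h i (s i))
  refine Measure.le_iff.2 fun s hs => ?_
  simpa only [Measure.pi, toMeasure_apply _ _ hs] using outer_le s

theorem measurePi_univ_pi_of_sigmaFinite_restrict {s : ∀ i, Set (α i)}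
    (hs : ∀ i, MeasurableSet (s i)) [∀ i, SigmaFinite ((m i).restrict (s i))] :
    Measure.pi m (Set.univ.pi s) = ∏ i, m i (s i) := by
  apply le_antisymm
  · rw [Measure.pi, toMeasure_apply _ _ (MeasurableSet.univ_pi hs)]
    exact OuterMeasure.pi_pi_le _ s
  · calc ∏ i, m i (s i) = Measure.pi (fun i => (m i).restrict (s i)) (Set.univ.pi s) := by
          simp only [Measure.pi_pi, Measure.restrict_apply_self]
      _ ≤ Measure.pi m (Set.univ.pi s) := measurePi_mono (fun _ => Measure.restrict_le_self) _

theorem measurePi_restrict_univ_pi {A : ∀ i, Set (α i)} (hA : ∀ i, MeasurableSet (A i))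
    [∀ i, SigmaFinite ((m i).restrict (A i))] :
    (Measure.pi m).restrict (Set.univ.pi A) = Measure.pi fun i => (m i).restrict (A i) := by
  refine (Measure.pi_eq fun s hs => ?_).symm
  have (i : ι) : SigmaFinite ((m i).restrict (s i ∩ A i)) := by
    rw [← Measure.restrict_restrict (hs i)]
    infer_instance
  rw [Measure.restrict_apply (MeasurableSet.univ_pi hs), ← Set.pi_inter_distrib,
    measurePi_univ_pi_of_sigmaFinite_restrict fun i => (hs i).inter (hA i)]
  simp only [Measure.restrict_apply (hs _)]

theorem integral_measurePi_congr_of_restrict_eq {F : Type*} [NormedAddCommGroup F]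
    [NormedSpace ℝ F] {A : ∀ i, Set (α i)} (hA : ∀ i, MeasurableSet (A i))
    [∀ i, SigmaFinite ((m i).restrict (A i))]
    (h : ∀ i, (m i).restrict (A i) = (m' i).restrict (A i))
    {f : (∀ i, α i) → F} (hf : ∀ z, (∃ i, z i ∉ A i) → f z = 0) :
    ∫ z, f z ∂Measure.pi m = ∫ z, f z ∂Measure.pi m' := by
  have (i : ι) : SigmaFinite ((m' i).restrict (A i)) := h i ▸ inferInstance
  have hf' : ∀ z ∉ Set.univ.pi A, f z = 0 := fun z hz => hf z (by simpa using hz)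
  calc ∫ z, f z ∂Measure.pi m
      = ∫ z in Set.univ.pi A, f z ∂Measure.pi m :=
        (setIntegral_eq_integral_of_forall_compl_eq_zero hf').symm
    _ = ∫ z in Set.univ.pi A, f z ∂Measure.pi m' := by
        simp only [measurePi_restrict_univ_pi hA, h]
    _ = ∫ z, f z ∂Measure.pi m' := setIntegral_eq_integral_of_forall_compl_eq_zero hf'

end PiMeasure

section WeakContinuity

theorem finiteMeasurePi_eq_prod_mass_smul_pi_normalize {ι : Type*} [Fintype ι] {α : ι → Type*}
    [∀ i, MeasurableSpace (α i)] [∀ i, Nonempty (α i)] (m : ∀ i, FiniteMeasure (α i)) :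
    FiniteMeasure.pi m =
      (∏ i, (m i).mass) • (ProbabilityMeasure.pi fun i => (m i).normalize).toFiniteMeasure := by
  refine Subtype.ext (Measure.pi_eq fun s _ => ?_)
  simp only [FiniteMeasure.val_eq_toMeasure, ← FiniteMeasure.ennreal_coeFn_eq_coeFn_toMeasure,
    FiniteMeasure.coeFn_smul, Pi.smul_apply, ProbabilityMeasure.coeFn_toFiniteMeasure,
    ProbabilityMeasure.pi_pi, smul_eq_mul, ← Finset.prod_mul_distrib,
    ← FiniteMeasure.self_eq_mass_mul_normalize, ENNReal.ofNNReal_finsetProd]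

theorem continuous_finiteMeasurePi {ι : Type*} [Fintype ι] {α : ι → Type*}
    [∀ i, MeasurableSpace (α i)] [∀ i, TopologicalSpace (α i)]
    [∀ i, SecondCountableTopology (α i)] [∀ i, TopologicalSpace.PseudoMetrizableSpace (α i)]
    [∀ i, OpensMeasurableSpace (α i)] :
    Continuous fun m : ∀ i, FiniteMeasure (α i) => FiniteMeasure.pi m := by
  refine continuous_iff_continuousAt.2 fun m => ?_
  have mass_tendsto : Tendsto (fun p : ∀ i, FiniteMeasure (α i) => ∏ i, (p i).mass) (𝓝 m)
      (𝓝 (∏ i, (m i).mass)) := Continuous.tendsto (by fun_prop) m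
  by_cases hm : ∃ i, m i = 0
  · have prod_mass_eq_zero : ∏ i, (m i).mass = 0 := by
      obtain ⟨i, hi⟩ := hm
      exact Finset.prod_eq_zero (Finset.mem_univ i) (by rw [hi, FiniteMeasure.zero_mass])
    have pi_eq_zero : FiniteMeasure.pi m = 0 := by
      rw [← FiniteMeasure.mass_zero_iff, FiniteMeasure.mass_pi, prod_mass_eq_zero]
    rw [ContinuousAt, pi_eq_zero]
    apply FiniteMeasure.tendsto_zero_of_tendsto_zero_mass
    simpa only [FiniteMeasure.mass_pi, prod_mass_eq_zero] using mass_tendsto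
  · push Not at hm
    have (i : ι) : Nonempty (α i) := by
      by_contra! hempty
      exact hm i (Subtype.ext (Subsingleton.elim _ _))
    have normalize_tendsto : Tendsto (fun (p : ∀ i, FiniteMeasure (α i)) i => (p i).normalize)
        (𝓝 m) (𝓝 fun i => (m i).normalize) :=
      tendsto_pi_nhds.2 fun i =>
        FiniteMeasure.tendsto_normalize_of_tendsto (continuousAt_apply i m) (hm i)
    rw [funext finiteMeasurePi_eq_prod_mass_smul_pi_normalize]
    exact mass_tendsto.smul ((ProbabilityMeasure.toFiniteMeasure_continuous.comp
      ProbabilityMeasure.continuous_pi).continuousAt.tendsto.comp normalize_tendsto)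

variable {T X : Type*} [TopologicalSpace T] [MeasurableSpace T] [OpensMeasurableSpace T]
  [TopologicalSpace X] [FirstCountableTopology X]

theorem continuous_integral_left (μ : Measure T) [IsFiniteMeasure μ]
    (f : T × X →ᵇ ℝ) : Continuous fun x => ∫ t, f (t, x) ∂μ := by
  refine continuous_of_dominated (bound := fun _ => ‖f‖) (fun x => ?_)
    (fun x => .of_forall fun t => f.norm_coe_le_norm _) (integrable_const _)
    (.of_forall fun t => by fun_prop)
  exact (by fun_prop : Continuous fun t => f (t, x)).aestronglyMeasurable

theorem continuous_finiteMeasure_prod_right [MeasurableSpace X] [OpensMeasurableSpace X]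
    [SecondCountableTopologyEither T X] (μ : FiniteMeasure T) :
    Continuous fun q : FiniteMeasure X => μ.prod q := by
  rw [FiniteMeasure.continuous_iff_forall_continuous_integral]
  intro f
  let g : X →ᵇ ℝ := .ofNormedAddCommGroup _ (continuous_integral_left (μ : Measure T) f) _
    fun x => norm_integral_le_of_norm_le_const (.of_forall fun t => f.norm_coe_le_norm (t, x))
  have fubini (q : FiniteMeasure X) : ∫ z, f z ∂(μ.prod q : Measure (T × X)) = ∫ x, g x ∂q := by
    rw [FiniteMeasure.toMeasure_prod, integral_prod_symm _ (f.integrable _)]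
    rfl
  simp only [fubini]
  exact FiniteMeasure.continuous_integral_boundedContinuousFunction g

end WeakContinuity

section AwayFromPoint

variable {X : Type*} [PseudoMetricSpace X]

/-- `μ` is finite on the complement of every ball around `x₀`. Its mass at `x₀` is arbitrary. -/
def FiniteAwayFrom [MeasurableSpace X] (x₀ : X) (μ : Measure X) : Prop :=
  ∀ r > (0 : ℝ), μ {x | r ≤ dist x₀ x} ≠ ⊤

/-- Convergence of `ν j` to `μ` along `L` when tested against the bounded continuous functions that
vanish on a neighbourhood of `x₀`. -/
def TendstoAwayFrom {J : Type*} [MeasurableSpace X] (x₀ : X) (ν : J → Measure X)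
    (L : Filter J) (μ : Measure X) : Prop :=
  ∀ h : X → ℝ, Continuous h → (∃ C, ∀ x, |h x| ≤ C) →
    (∃ r > (0 : ℝ), ∀ x, dist x₀ x < r → h x = 0) →
    Tendsto (fun j => ∫ x, h x ∂(ν j)) L (𝓝 (∫ x, h x ∂μ))

/-- A continuous function with values in `[0, 1]`, equal to `1` where `r ≤ dist x₀ x` and to `0`
where `dist x₀ x < r / 2`. -/
noncomputable def awayCutoff (x₀ : X) {r : ℝ} (hr : 0 < r) : X →ᵇ ℝ≥0 :=
  thickenedIndicator (half_pos hr) {x | r ≤ dist x₀ x}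

theorem awayCutoff_le_one (x₀ : X) {r : ℝ} (hr : 0 < r) (x : X) : awayCutoff x₀ hr x ≤ 1 :=
  thickenedIndicator_le_one _ _ x

theorem awayCutoff_eq_one {x₀ x : X} {r : ℝ} (hr : 0 < r) (hx : r ≤ dist x₀ x) :
    awayCutoff x₀ hr x = 1 :=
  thickenedIndicator_one (half_pos hr) {x | r ≤ dist x₀ x} hx

theorem awayCutoff_eq_zero {x₀ x : X} {r : ℝ} (hr : 0 < r) (hx : dist x₀ x < r / 2) :
    awayCutoff x₀ hr x = 0 := by
  refine thickenedIndicator_zero (half_pos hr) _ fun hmem => ?_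
  obtain ⟨y, hy, hxy⟩ := mem_thickening_iff.1 hmem
  have hy : r ≤ dist x₀ y := hy
  linarith [dist_triangle x₀ x y]

variable [MeasurableSpace X] [OpensMeasurableSpace X]

theorem measurableSet_le_dist_left (x₀ : X) (r : ℝ) : MeasurableSet {x | r ≤ dist x₀ x} :=
  (isClosed_le continuous_const (by fun_prop)).measurableSet

theorem restrict_withDensity_awayCutoff (μ : Measure X) (x₀ : X) {r : ℝ} (hr : 0 < r) :
    (μ.withDensity fun x => awayCutoff x₀ hr x).restrict {x | r ≤ dist x₀ x} =
      μ.restrict {x | r ≤ dist x₀ x} := by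
  have cutoff_ae_eq_one : (fun x => (awayCutoff x₀ hr x : ENNReal)) =ᵐ[μ.restrict
      {x | r ≤ dist x₀ x}] 1 := by
    filter_upwards [ae_restrict_mem (measurableSet_le_dist_left x₀ r)] with x hx
    rw [awayCutoff_eq_one hr hx, ENNReal.coe_one, Pi.one_apply]
  rw [restrict_withDensity (measurableSet_le_dist_left x₀ r), withDensity_congr_ae cutoff_ae_eq_one,
    withDensity_one]

namespace FiniteAwayFrom

variable {x₀ : X} {μ : Measure X}

theorem isFiniteMeasure_withDensity_awayCutoff (hμ : FiniteAwayFrom x₀ μ) {r : ℝ} (hr : 0 < r) :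
    IsFiniteMeasure (μ.withDensity fun x => awayCutoff x₀ hr x) := by
  refine isFiniteMeasure_withDensity (ne_top_of_le_ne_top (hμ _ (half_pos hr)) ?_)
  rw [← lintegral_indicator_one (measurableSet_le_dist_left x₀ (r / 2))]
  refine lintegral_mono fun x => ?_
  by_cases hx : r / 2 ≤ dist x₀ x
  · rw [Set.indicator_of_mem (by exact hx), Pi.one_apply]
    exact ENNReal.coe_le_one_iff.2 (awayCutoff_le_one x₀ hr x)
  · rw [awayCutoff_eq_zero hr (not_le.1 hx), ENNReal.coe_zero]
    exact zero_le

/-- The finite measure obtained from `μ` by removing its mass near `x₀` with `awayCutoff`. -/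
noncomputable def cutoff (hμ : FiniteAwayFrom x₀ μ) {r : ℝ} (hr : 0 < r) : FiniteMeasure X :=
  ⟨μ.withDensity fun x => awayCutoff x₀ hr x, hμ.isFiniteMeasure_withDensity_awayCutoff hr⟩

theorem integral_cutoff (hμ : FiniteAwayFrom x₀ μ) {r : ℝ} (hr : 0 < r) (h : X → ℝ) :
    ∫ x, h x ∂(hμ.cutoff hr : Measure X) = ∫ x, awayCutoff x₀ hr x • h x ∂μ :=
  integral_withDensity_eq_integral_smul (awayCutoff x₀ hr).continuous.measurable h

theorem tendsto_cutoff {J : Type*} {L : Filter J} {ν : J → Measure X}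
    (hν : ∀ j, FiniteAwayFrom x₀ (ν j)) (hμ : FiniteAwayFrom x₀ μ)
    (hconv : TendstoAwayFrom x₀ ν L μ) {r : ℝ} (hr : 0 < r) :
    Tendsto (fun j => (hν j).cutoff hr) L (𝓝 (hμ.cutoff hr)) := by
  refine FiniteMeasure.tendsto_iff_forall_integral_tendsto.2 fun h => ?_
  simp only [integral_cutoff]
  refine hconv _ (by fun_prop) ⟨‖h‖, fun x => ?_⟩ ⟨r / 2, half_pos hr, fun x hx => ?_⟩
  · calc |awayCutoff x₀ hr x • h x| = awayCutoff x₀ hr x * |h x| := by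
          rw [NNReal.smul_def, smul_eq_mul, abs_mul, NNReal.abs_eq]
      _ ≤ |h x| := mul_le_of_le_one_left (abs_nonneg _) (mod_cast awayCutoff_le_one x₀ hr x)
      _ ≤ ‖h‖ := h.norm_coe_le_norm x
  · rw [awayCutoff_eq_zero hr hx, zero_smul]

end FiniteAwayFrom

end AwayFromPoint

namespace FiniteAwayFrom

variable {X : Type*} [MetricSpace X] [MeasurableSpace X] [OpensMeasurableSpace X] {x₀ : X}
  {μ : Measure X}

theorem sFinite (hμ : FiniteAwayFrom x₀ μ) : SFinite μ := by
  have sigmaFinite_compl : SigmaFinite (μ.restrict {x₀}ᶜ) := by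
    refine ⟨⟨⟨fun n : ℕ => {x₀} ∪ {x | 1 / ((n : ℝ) + 1) ≤ dist x₀ x}, fun _ => trivial,
      fun n => ?_, ?_⟩⟩⟩
    · refine measure_union_lt_top ?_ ?_
      · simp [Measure.restrict_apply (measurableSet_singleton x₀)]
      · exact (Measure.restrict_apply_le _ _).trans_lt (hμ _ Nat.one_div_pos_of_nat).lt_top
    · refine Set.eq_univ_of_forall fun x => Set.mem_iUnion.2 ?_
      rcases eq_or_ne x x₀ with rfl | hx
      · exact ⟨0, .inl rfl⟩
      · obtain ⟨n, hn⟩ := exists_nat_one_div_lt (dist_pos.2 hx.symm)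
        exact ⟨n, .inr hn.le⟩
  rw [← Measure.restrict_add_restrict_compl (μ := μ) (measurableSet_singleton x₀),
    Measure.restrict_singleton]
  infer_instance

theorem integral_pi_prod_eq_integral_pi_prod_cutoff {ι T : Type*} [Fintype ι] [MeasurableSpace T]
    (hμ : FiniteAwayFrom x₀ μ) (lam : Measure T) [IsFiniteMeasure lam] {r : ℝ} (hr : 0 < r)
    {f : (ι → T × X) → ℝ} (hf : ∀ z, (∃ i, dist x₀ (z i).2 < r) → f z = 0) :
    ∫ z, f z ∂(Measure.pi fun _ : ι => lam.prod μ) =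
      ∫ z, f z ∂(Measure.pi fun _ : ι => lam.prod (hμ.cutoff hr : Measure X)) := by
  have := hμ.sFinite
  have restrict_prod (q : Measure X) [SFinite q] :
      (lam.prod q).restrict (Set.univ ×ˢ {x | r ≤ dist x₀ x}) =
        lam.prod (q.restrict {x | r ≤ dist x₀ x}) := by
    rw [← Measure.prod_restrict, Measure.restrict_univ]
  have : IsFiniteMeasure (μ.restrict {x | r ≤ dist x₀ x}) := isFiniteMeasure_restrict.2 (hμ r hr)
  have : SigmaFinite ((lam.prod μ).restrict (Set.univ ×ˢ {x | r ≤ dist x₀ x})) := by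
    rw [restrict_prod]
    infer_instance
  refine integral_measurePi_congr_of_restrict_eq
    (fun _ => MeasurableSet.univ.prod (measurableSet_le_dist_left x₀ r)) (fun _ => ?_)
    (fun z ⟨i, hi⟩ => hf z ⟨i, by simpa using hi⟩)
  rw [restrict_prod, restrict_prod]
  exact congrArg lam.prod (restrict_withDensity_awayCutoff μ x₀ hr).symm

end FiniteAwayFrom

theorem stmt_3_general
    {T : Type*} [TopologicalSpace T] [SecondCountableTopology T]
    [TopologicalSpace.PseudoMetrizableSpace T] [MeasurableSpace T] [OpensMeasurableSpace T]
    {X : Type*} [MetricSpace X] [SecondCountableTopology X] [MeasurableSpace X]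
    [OpensMeasurableSpace X] {x₀ : X} (lam : Measure T) [IsFiniteMeasure lam]
    {J : Type*} {L : Filter J} {ν : J → Measure X} {μ : Measure X}
    (hν : ∀ j, FiniteAwayFrom x₀ (ν j)) (hμ : FiniteAwayFrom x₀ μ)
    (hconv : TendstoAwayFrom x₀ ν L μ) {ι : Type*} [Fintype ι] {f : (ι → T × X) → ℝ}
    (hfc : Continuous f) (hfb : ∃ C, ∀ z, |f z| ≤ C)
    (hfvan : ∃ r > (0 : ℝ), ∀ z : ι → T × X, (∃ i, dist x₀ (z i).2 < r) → f z = 0) :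
    Tendsto (fun j => ∫ z, f z ∂(Measure.pi fun _ : ι => lam.prod (ν j))) L
      (𝓝 (∫ z, f z ∂(Measure.pi fun _ : ι => lam.prod μ))) := by
  obtain ⟨C, hC⟩ := hfb
  obtain ⟨r, hr, hf⟩ := hfvan
  let l : FiniteMeasure T := ⟨lam, inferInstance⟩
  let F : (ι → T × X) →ᵇ ℝ := .ofNormedAddCommGroup f hfc C hC
  have continuous_tensorPower_integral : Continuous fun q : FiniteMeasure X =>
      ∫ z, F z ∂(FiniteMeasure.pi fun _ : ι => l.prod q : Measure (ι → T × X)) :=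
    (FiniteMeasure.continuous_integral_boundedContinuousFunction F).comp
      (continuous_finiteMeasurePi.comp
        (continuous_pi fun _ => continuous_finiteMeasure_prod_right l))
  rw [hμ.integral_pi_prod_eq_integral_pi_prod_cutoff lam hr hf]
  simp only [fun j => (hν j).integral_pi_prod_eq_integral_pi_prod_cutoff lam hr hf]
  exact (continuous_tensorPower_integral.tendsto _).comp
    (FiniteAwayFrom.tendsto_cutoff hν hμ hconv hr)

/-- Convergence of tensor powers of product measures `(λ⊗ν_n)^{⊗k} → (λ⊗μ)^{⊗k}`
(Lemma 5.1 of the paper). -/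
theorem stmt_3
    {T : Type*} [MetricSpace T] [CompleteSpace T] [TopologicalSpace.SeparableSpace T]
    [MeasurableSpace T] [BorelSpace T]
    {X : Type*} [MetricSpace X] [CompleteSpace X] [TopologicalSpace.SeparableSpace X]
    [MeasurableSpace X] [BorelSpace X]
    (x0 : X)
    (lam : Measure T) [IsFiniteMeasure lam]
    (ν : ℕ → Measure X) (μ : Measure X)
    (hνFin : ∀ n, ∀ r > (0 : ℝ), ν n {x | r ≤ dist x0 x} ≠ ⊤)
    (hμFin : ∀ r > (0 : ℝ), μ {x | r ≤ dist x0 x} ≠ ⊤)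
    (hconv : ∀ h : X → ℝ, Continuous h → (∃ C, ∀ x, |h x| ≤ C) →
      (∃ r > (0 : ℝ), ∀ x, dist x0 x < r → h x = 0) →
      Tendsto (fun n : ℕ => ∫ x, h x ∂(ν n)) atTop (𝓝 (∫ x, h x ∂μ)))
    (k : ℕ) (hk : 1 ≤ k)
    (f : (Fin k → T × X) → ℝ) (hfc : Continuous f) (hfb : ∃ C, ∀ z, |f z| ≤ C)
    (hfvan : ∃ r > (0 : ℝ), ∀ z : Fin k → T × X, (∃ i, dist x0 (z i).2 < r) → f z = 0) :
    Tendsto (fun n : ℕ => ∫ z, f z ∂(Measure.pi fun _ : Fin k => lam.prod (ν n))) atTop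
      (𝓝 (∫ z, f z ∂(Measure.pi fun _ : Fin k => lam.prod μ))) := by
  have := UniformSpace.secondCountable_of_separable T
  have := UniformSpace.secondCountable_of_separable X
  exact stmt_3_general lam hνFin hμFin hconv hfc hfb hfvan
end

section
/- Let λ be a finite nonzero Borel measure on 𝒯 and let ν be a Borel probability measure on 𝒳 with ν({0}) = 0 that is regularly varying with scaling sequence (a_n) and limit measure μ. Let N be Poisson with mean λ(𝒯), T_1,T_2,… i.i.d. with law λ/λ(𝒯), X_1,X_2,… i.i.d. with law ν, all mutually independent. Let k ≥ 0 be an integer, let r > 0 satisfy μ({x : d(0,x) = r}) = 0, and let f : 𝒯×𝒳 → [0,∞) be bounded continuous with f(t,x) = 0 whenever d(0,x) < r. Then n^{k+1}·E[exp(−Σ_{i=1}^{N} f(T_i, a_n⁻¹•X_i))·1{#{1 ≤ i ≤ N : d(0, a_n⁻¹•X_i) ≥ r} ≥ k+1}] → (1/(k+1)!)·∫_{(𝒯×𝒳)^{k+1}} e^{−Σ_{j=1}^{k+1} f(t_j,x_j)} ∏_{j=1}^{k+1} 1{d(0,x_j) ≥ r} λ(dt_1)μ(dx_1)⋯λ(dt_{k+1})μ(dx_{k+1})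 as n → ∞. -/
open MeasureTheory Filter Metric Topology

/-!
For a Poisson process of finite intensity `m`, the number of points in `G` is Poisson and
independent of the points outside `G`. Hence, if `w = 1` outside `G`, the expectation of the product
of `w` over the points, on the event of at least `k` points in `G`, equals
`exp (-m(G)) * (exp A - ∑ n < k, A ^ n / n!)` with `A = ∫_G w dm`.
Under regular variation `m(G) → 0` and `b * A` converges for the rate `b → ∞`, so that only the
leading Taylor term `A ^ k / k!` survives multiplication by `b ^ k`. The indicator of `G` is
discontinuous, but only on a null set of the limit measure.
-/

open scoped Nat NNReal

section Exponential

lemma hasSum_sum_range_choose_mul_pow_div_factorial {c : ℕ → ℝ} {C : ℝ} (hc : ∀ n, |c n| ≤ C)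
    (x y : ℝ) :
    HasSum (fun n ↦ (∑ m ∈ Finset.range (n + 1), n.choose m * (c m * x ^ m * y ^ (n - m))) / n !)
      ((∑' n, c n * (x ^ n / n !)) * Real.exp y) := by
  have summable_left : Summable fun n ↦ ‖c n * (x ^ n / n !)‖ := by
    refine ((Real.summable_pow_div_factorial x).norm.mul_left C).of_nonneg_of_le
      (fun _ ↦ norm_nonneg _) fun n ↦ ?_
    rw [norm_mul]
    exact mul_le_mul_of_nonneg_right (hc n) (norm_nonneg _)
  have exp_eq : Real.exp y = ∑' n : ℕ, y ^ n / n ! := by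
    rw [Real.exp_eq_exp_ℝ, NormedSpace.exp_eq_tsum_div]
  rw [exp_eq]
  refine (hasSum_sum_range_mul_of_summable_norm summable_left
    (Real.summable_pow_div_factorial y).norm).congr_fun fun n ↦ ?_
  rw [Finset.sum_div]
  refine Finset.sum_congr rfl fun m hm ↦ ?_
  rw [Nat.cast_choose ℝ (Finset.mem_range_succ_iff.1 hm)]
  field_simp

lemma tsum_ite_mul_pow_div_factorial (k : ℕ) (x : ℝ) :
    ∑' n : ℕ, (if k ≤ n then 1 else 0) * (x ^ n / n !)
      = Real.exp x - ∑ n ∈ Finset.range k, x ^ n / n ! := by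
  have hexp : HasSum (fun n : ℕ ↦ x ^ n / n !) (Real.exp x) := by
    rw [Real.exp_eq_exp_ℝ]
    exact NormedSpace.expSeries_div_hasSum_exp x
  have head : HasSum (fun n : ℕ ↦ if n ∈ Finset.range k then x ^ n / n ! else 0)
      (∑ n ∈ Finset.range k, x ^ n / n !) := by
    convert hasSum_sum_of_ne_finset_zero (L := SummationFilter.unconditional ℕ)
      (s := Finset.range k) (fun n hn ↦ if_neg hn) using 1
    exact Finset.sum_congr rfl fun n hn ↦ (if_pos hn).symm
  rw [← (hexp.sub head).tsum_eq]
  refine tsum_congr fun n ↦ ?_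
  rcases le_or_gt k n with hn | hn
  · simp [hn, hn.not_gt]
  · simp [hn, hn.not_ge]

variable {ι : Type*} {l : Filter ι} {b x : ι → ℝ} {L : ℝ}

lemma tendsto_zero_of_tendsto_mul_atTop (hb : Tendsto b l atTop)
    (hx : Tendsto (fun i ↦ b i * x i) l (𝓝 L)) : Tendsto x l (𝓝 0) := by
  have h := (tendsto_inv_atTop_zero.comp hb).mul hx
  rw [zero_mul] at h
  refine h.congr' ?_
  filter_upwards [hb.eventually_ne_atTop 0] with i hi
  exact inv_mul_cancel_left₀ hi _

lemma tendsto_pow_mul_exp_sub_sum_range (hb : Tendsto b l atTop)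
    (hx : Tendsto (fun i ↦ b i * x i) l (𝓝 L)) (k : ℕ) :
    Tendsto (fun i ↦ b i ^ k * (Real.exp (x i) - ∑ n ∈ Finset.range k, x i ^ n / n !)) l
      (𝓝 ((k ! : ℝ)⁻¹ * L ^ k)) := by
  have leading : Tendsto (fun i ↦ (k ! : ℝ)⁻¹ * (b i * x i) ^ k) l (𝓝 ((k ! : ℝ)⁻¹ * L ^ k)) :=
    (hx.pow k).const_mul _
  have remainder : Tendsto (fun i ↦ b i ^ k *
      (Real.exp (x i) - ∑ n ∈ Finset.range (k + 1), x i ^ n / n !)) l (𝓝 0) := by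
    have taylor := (Real.exp_sub_sum_range_succ_isLittleO_pow k).comp_tendsto
      (tendsto_zero_of_tendsto_mul_atTop hb hx)
    have scaled := (Asymptotics.isBigO_refl (fun i ↦ b i ^ k) l).mul_isLittleO taylor
    refine (scaled.trans_isBigO ?_).tendsto_zero_of_tendsto (hx.pow k)
    exact Asymptotics.isBigO_of_le l fun i ↦ by simp [mul_pow]
  convert leading.add remainder using 2 with i
  · rw [Finset.sum_range_succ]
    ring
  · rw [add_zero]

end Exponential

section Pi

variable {ι α : Type*} [Fintype ι]

lemma card_filter_mul_prod_eq_sum (c : ℕ → ℝ) (G : Set α) [DecidablePred (· ∈ G)] (w : α → ℝ)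
    (z : ι → α) :
    c (Finset.card {i | z i ∈ G}) * ∏ i, w (z i)
      = ∑ S : Finset ι, c S.card * ∏ i, open Classical in
          (if i ∈ S then G else Gᶜ).indicator w (z i) := by
  classical
  rw [Finset.sum_eq_single (Finset.univ.filter fun i ↦ z i ∈ G)]
  · congr 1
    refine Finset.prod_congr rfl fun i _ ↦ ?_
    by_cases hi : z i ∈ G <;> simp [hi]
  · intro S _ hS
    obtain ⟨i, hi⟩ : ∃ i, ¬(i ∈ S ↔ z i ∈ G) := by
      by_contra! h
      exact hS (by ext i; simp [h i])
    rw [Finset.prod_eq_zero (Finset.mem_univ i), mul_zero]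
    by_cases hiS : i ∈ S <;> simp_all
  · simp

variable [MeasurableSpace α]

/- The limit measure may have infinite mass at `x₀`, so `Measure.pi` is needed for an `m` which is
only σ-finite on the sides of the box. -/
lemma pi_pi_of_sigmaFinite_restrict {m : Measure α} {s : ι → Set α}
    (hs : ∀ i, MeasurableSet (s i)) [∀ i, SigmaFinite (m.restrict (s i))] :
    Measure.pi (fun _ : ι ↦ m) (Set.univ.pi s) = ∏ i, m (s i) := by
  have pi_eq_outer : Measure.pi (fun _ : ι ↦ m) (Set.univ.pi s)
      = OuterMeasure.pi (fun _ ↦ m.toOuterMeasure) (Set.univ.pi s) := by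
    rw [Measure.pi, toMeasure_apply _ _ (MeasurableSet.univ_pi hs)]
  have restrict_le : (Measure.pi fun i ↦ m.restrict (s i)).toOuterMeasure
      ≤ OuterMeasure.pi fun _ ↦ m.toOuterMeasure := by
    refine OuterMeasure.le_pi.2 fun t _ ↦ ?_
    rw [Measure.coe_toOuterMeasure, Measure.pi_pi]
    exact Finset.prod_le_prod' fun i _ ↦ Measure.restrict_apply_le _ _
  rw [pi_eq_outer]
  refine le_antisymm (OuterMeasure.pi_pi_le _ _) ?_
  simpa [Measure.pi_pi] using restrict_le (Set.univ.pi s)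

lemma restrict_pi_of_sigmaFinite_restrict {m : Measure α} {G : Set α} (hG : MeasurableSet G)
    [SigmaFinite (m.restrict G)] :
    (Measure.pi fun _ : ι ↦ m).restrict (Set.univ.pi fun _ ↦ G)
      = Measure.pi fun _ ↦ m.restrict G := by
  refine (Measure.pi_eq fun s hs ↦ ?_).symm
  have (i : ι) : SigmaFinite (m.restrict (s i ∩ G)) := by
    rw [← Measure.restrict_restrict (hs i)]
    infer_instance
  rw [Measure.restrict_apply (MeasurableSet.univ_pi hs), ← Set.pi_inter_distrib,
    pi_pi_of_sigmaFinite_restrict fun i ↦ (hs i).inter hG]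
  exact Finset.prod_congr rfl fun i _ ↦ (Measure.restrict_apply (hs i)).symm

lemma integral_pi_prod_indicator {m : Measure α} {G : Set α} (hG : MeasurableSet G)
    [SigmaFinite (m.restrict G)] (w : α → ℝ) :
    ∫ z : ι → α, ∏ i, G.indicator w (z i) ∂Measure.pi (fun _ ↦ m)
      = (∫ x in G, w x ∂m) ^ Fintype.card ι := by
  have prod_eq (z : ι → α) : ∏ i, G.indicator w (z i)
      = (Set.univ.pi fun _ ↦ G).indicator (fun z ↦ ∏ i, w (z i)) z := by
    by_cases hz : ∀ i, z i ∈ G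
    · simp [hz]
    · rw [Set.indicator_of_notMem (by simpa using hz)]
      obtain ⟨i, hi⟩ := not_forall.1 hz
      exact Finset.prod_eq_zero (Finset.mem_univ i) (Set.indicator_of_notMem hi _)
  simp_rw [prod_eq]
  rw [integral_indicator (MeasurableSet.univ_pi fun _ ↦ hG), restrict_pi_of_sigmaFinite_restrict hG,
    integral_fintype_prod_eq_pow]

lemma integral_pi_exp_neg_sum_mul_prod_ite {m : Measure α} {G : Set α} [DecidablePred (· ∈ G)]
    (hG : MeasurableSet G) [SigmaFinite (m.restrict G)] (f : α → ℝ) :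
    ∫ z : ι → α, Real.exp (-∑ i, f (z i)) * ∏ i, (if z i ∈ G then 1 else 0)
        ∂Measure.pi (fun _ ↦ m)
      = (∫ x in G, Real.exp (-f x) ∂m) ^ Fintype.card ι := by
  rw [← integral_pi_prod_indicator hG]
  refine integral_congr_ae (ae_of_all _ fun z ↦ ?_)
  simp only [← Finset.sum_neg_distrib, Real.exp_sum, ← Finset.prod_mul_distrib, mul_ite, mul_one,
    mul_zero, Set.indicator_apply]

lemma integral_pi_card_filter_mul_prod {m : Measure α} [SigmaFinite m] {G : Set α}
    [DecidablePred (· ∈ G)] (hG : MeasurableSet G) {w : α → ℝ} (hw : Integrable w m)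
    (c : ℕ → ℝ) :
    ∫ z : ι → α, c (Finset.card {i | z i ∈ G}) * ∏ i, w (z i) ∂Measure.pi (fun _ ↦ m)
      = ∑ n ∈ Finset.range (Fintype.card ι + 1), (Fintype.card ι).choose n *
          (c n * (∫ x in G, w x ∂m) ^ n * (∫ x in Gᶜ, w x ∂m) ^ (Fintype.card ι - n)) := by
  classical
  have hpiece (S : Finset ι) (i : ι) : MeasurableSet (if i ∈ S then G else Gᶜ) := by
    split_ifs
    exacts [hG, hG.compl]
  have integral_piece (S : Finset ι) :
      ∫ z : ι → α, ∏ i, (if i ∈ S then G else Gᶜ).indicator w (z i) ∂Measure.pi (fun _ ↦ m)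
        = (∫ x in G, w x ∂m) ^ S.card * (∫ x in Gᶜ, w x ∂m) ^ (Fintype.card ι - S.card) := by
    rw [integral_fintype_prod_eq_prod (fun i ↦ (if i ∈ S then G else Gᶜ).indicator w)]
    simp_rw [fun i ↦ integral_indicator (μ := m) (f := w) (hpiece S i),
      apply_ite (fun s ↦ ∫ x in s, w x ∂m)]
    rw [Finset.prod_ite, Finset.prod_const, Finset.prod_const, Finset.filter_univ_mem,
      Finset.filter_notMem_eq_sdiff, ← Finset.compl_eq_univ_sdiff, Finset.card_compl]
  simp_rw [card_filter_mul_prod_eq_sum]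
  rw [integral_finsetSum _ fun S _ ↦ (Integrable.fintype_prod fun i ↦
    hw.indicator (hpiece S i)).const_mul _]
  simp_rw [integral_const_mul, integral_piece, ← mul_assoc]
  rw [← Finset.powerset_univ, Finset.sum_powerset_apply_card (fun n ↦ c n *
    (∫ x in G, w x ∂m) ^ n * (∫ x in Gᶜ, w x ∂m) ^ (Fintype.card ι - n))]
  simp [mul_assoc]

end Pi

/-- `Z 0, …, Z (N - 1)` are the points of a Poisson process of finite intensity `m`, in Janossy
form: on the event of `j` points, these have the joint law `exp (-m(α)) / j! • m^⊗j`. Taking total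
masses shows that `N` has the Poisson law of mean `m(α)`; the `Z i` with `i ≥ N` are irrelevant. -/
structure IsPoissonSample {Ω α : Type*} [MeasurableSpace Ω] [MeasurableSpace α] (P : Measure Ω)
    (m : Measure α) (N : Ω → ℕ) (Z : ℕ → Ω → α) : Prop where
  measurable_count : Measurable N
  measurable_point : ∀ i, Measurable (Z i)
  map_restrict : ∀ j, (P.restrict {ω | N ω = j}).map (fun ω (i : Fin j) ↦ Z i ω)
    = ENNReal.ofReal (Real.exp (-m.real Set.univ) / j !) • Measure.pi fun _ ↦ m

namespace IsPoissonSample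

variable {Ω α : Type*} [MeasurableSpace Ω] [MeasurableSpace α] {P : Measure Ω} {m : Measure α}
  {N : Ω → ℕ} {Z : ℕ → Ω → α}

lemma map [IsFiniteMeasure m] (h : IsPoissonSample P m N Z) {β : Type*} [MeasurableSpace β]
    {g : α → β} (hg : Measurable g) : IsPoissonSample P (m.map g) N fun i ω ↦ g (Z i ω) where
  measurable_count := h.measurable_count
  measurable_point i := hg.comp (h.measurable_point i)
  map_restrict j := by
    have map_points : Measurable fun (z : Fin j → α) i ↦ g (z i) :=
      measurable_pi_lambda _ fun i ↦ hg.comp (measurable_pi_apply i)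
    calc (P.restrict {ω | N ω = j}).map (fun ω (i : Fin j) ↦ g (Z i ω))
        = ((P.restrict {ω | N ω = j}).map fun ω (i : Fin j) ↦ Z i ω).map fun z i ↦ g (z i) :=
          (Measure.map_map map_points (measurable_pi_lambda _ fun i ↦ h.measurable_point i)).symm
      _ = ENNReal.ofReal (Real.exp (-(m.map g).real Set.univ) / j !)
            • Measure.pi fun _ ↦ m.map g := by
          rw [h.map_restrict, Measure.map_smul,
            ← Measure.pi_map_pi fun _ ↦ hg.aemeasurable,
            map_measureReal_apply hg MeasurableSet.univ, Set.preimage_univ]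

lemma map_prodMk_right {T X X' : Type*} [MeasurableSpace T] [MeasurableSpace X]
    [MeasurableSpace X'] {lam : Measure T} [IsFiniteMeasure lam] {ν : Measure X}
    [IsFiniteMeasure ν] {U : ℕ → Ω → T} {V : ℕ → Ω → X}
    (h : IsPoissonSample P (lam.prod ν) N fun i ω ↦ (U i ω, V i ω)) {g : X → X'}
    (hg : Measurable g) :
    IsPoissonSample P (lam.prod (ν.map g)) N fun i ω ↦ (U i ω, g (V i ω)) := by
  have hmap := h.map (measurable_id.prodMap hg)
  rwa [← Measure.map_prod_map _ _ measurable_id hg, Measure.map_id] at hmap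

lemma hasSum_integral [IsFiniteMeasure P] (h : IsPoissonSample P m N Z)
    {H : ∀ j, (Fin j → α) → ℝ} (hH : ∀ j, Measurable (H j)) {C : ℝ} (hHC : ∀ j z, |H j z| ≤ C) :
    HasSum (fun j ↦ Real.exp (-m.real Set.univ) / j ! * ∫ z, H j z ∂Measure.pi fun _ ↦ m)
      (∫ ω, H (N ω) (fun i ↦ Z i ω) ∂P) := by
  have measurable_points (j : ℕ) : Measurable fun ω (i : Fin j) ↦ Z i ω :=
    measurable_pi_lambda _ fun i ↦ h.measurable_point i
  have measurable_level (j : ℕ) : MeasurableSet {ω | N ω = j} :=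
    h.measurable_count (measurableSet_singleton j)
  have measurable_integrand : Measurable fun ω ↦ H (N ω) fun i ↦ Z i ω :=
    (measurable_from_prod_countable_right (f := fun q : ℕ × Ω ↦ H q.1 fun i ↦ Z i q.2) fun j ↦
      (hH j).comp (measurable_points j)).comp (h.measurable_count.prodMk measurable_id)
  have integrable_integrand : Integrable (fun ω ↦ H (N ω) fun i ↦ Z i ω) P :=
    .of_bound measurable_integrand.aestronglyMeasurable C (ae_of_all _ fun ω ↦ hHC _ _)
  have level_sum := hasSum_integral_iUnion measurable_level
    (fun i j hij ↦ Set.disjoint_left.2 fun ω (hi : N ω = i) (hj : N ω = j) ↦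
      hij (hi.symm.trans hj)) integrable_integrand.integrableOn
  rw [Set.iUnion_eq_univ_iff.2 fun ω ↦ ⟨N ω, rfl⟩, setIntegral_univ] at level_sum
  refine level_sum.congr_fun fun j ↦ ?_
  symm
  calc ∫ ω in {ω | N ω = j}, H (N ω) (fun i ↦ Z i ω) ∂P
      = ∫ ω in {ω | N ω = j}, H j (fun i ↦ Z i ω) ∂P :=
        setIntegral_congr_fun (measurable_level j) fun ω (hω : N ω = j) ↦ by subst hω; rfl
    _ = ∫ z, H j z ∂(P.restrict {ω | N ω = j}).map fun ω (i : Fin j) ↦ Z i ω :=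
        (integral_map (measurable_points j).aemeasurable (hH j).aestronglyMeasurable).symm
    _ = Real.exp (-m.real Set.univ) / j ! * ∫ z, H j z ∂Measure.pi fun _ ↦ m := by
        rw [h.map_restrict, integral_smul_measure, ENNReal.toReal_ofReal (by positivity),
          smul_eq_mul]

lemma integral_card_filter_mul_prod [IsFiniteMeasure P] [IsFiniteMeasure m]
    (h : IsPoissonSample P m N Z) {G : Set α} [DecidablePred (· ∈ G)] (hG : MeasurableSet G)
    {w : α → ℝ} (hw : Measurable w) (hw1 : ∀ x, |w x| ≤ 1) {c : ℕ → ℝ} {C : ℝ}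
    (hc : ∀ n, |c n| ≤ C) :
    ∫ ω, c (Finset.card {i ∈ Finset.range (N ω) | Z i ω ∈ G})
        * ∏ i ∈ Finset.range (N ω), w (Z i ω) ∂P
      = Real.exp (-m.real Set.univ) * ((∑' n, c n * ((∫ x in G, w x ∂m) ^ n / n !))
          * Real.exp (∫ x in Gᶜ, w x ∂m)) := by
  let H (j : ℕ) (z : Fin j → α) : ℝ := c (Finset.card {i | z i ∈ G}) * ∏ i, w (z i)
  have integrand_eq (ω : Ω) : c (Finset.card {i ∈ Finset.range (N ω) | Z i ω ∈ G})
      * ∏ i ∈ Finset.range (N ω), w (Z i ω) = H (N ω) fun i ↦ Z i ω := by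
    simp only [H, Finset.card_filter, Finset.prod_range, Finset.sum_range]
  have measurable_H (j : ℕ) : Measurable (H j) := by
    have measurable_card : Measurable fun z : Fin j → α ↦ Finset.card {i | z i ∈ G} := by
      simp_rw [Finset.card_filter]
      exact Finset.measurable_sum _ fun i _ ↦
        .ite (measurable_pi_apply i hG) measurable_const measurable_const
    exact (measurable_of_countable c |>.comp measurable_card).mul
      (Finset.measurable_prod _ fun i _ ↦ hw.comp (measurable_pi_apply i))
  have abs_H_le (j : ℕ) (z : Fin j → α) : |H j z| ≤ C := by
    rw [abs_mul, Finset.abs_prod]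
    exact (mul_le_of_le_one_right (abs_nonneg _)
      (Finset.prod_le_one (fun _ _ ↦ abs_nonneg _) fun i _ ↦ hw1 _)).trans (hc _)
  have integrable_w : Integrable w m := .of_bound hw.aestronglyMeasurable 1 (ae_of_all _ hw1)
  simp_rw [integrand_eq]
  refine (h.hasSum_integral measurable_H abs_H_le).unique
    (((hasSum_sum_range_choose_mul_pow_div_factorial hc _ _).mul_left _).congr_fun fun j ↦ ?_)
  rw [integral_pi_card_filter_mul_prod hG integrable_w, Fintype.card_fin]
  ring

lemma integral_ite_card_filter_mul_prod [IsFiniteMeasure P] [IsFiniteMeasure m]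
    (h : IsPoissonSample P m N Z) {G : Set α} [DecidablePred (· ∈ G)] (hG : MeasurableSet G)
    {w : α → ℝ} (hw : Measurable w) (hw1 : ∀ x, |w x| ≤ 1) (hwG : ∀ x ∉ G, w x = 1) (k : ℕ) :
    ∫ ω, (if k ≤ Finset.card {i ∈ Finset.range (N ω) | Z i ω ∈ G} then
        ∏ i ∈ Finset.range (N ω), w (Z i ω) else 0) ∂P
      = Real.exp (-m.real G) * (Real.exp (∫ x in G, w x ∂m)
          - ∑ n ∈ Finset.range k, (∫ x in G, w x ∂m) ^ n / n !) := by
  have integral_compl : ∫ x in Gᶜ, w x ∂m = m.real Gᶜ := by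
    rw [setIntegral_congr_fun hG.compl hwG, setIntegral_const, smul_eq_mul, mul_one]
  have exp_mul_exp : Real.exp (-m.real Set.univ) * Real.exp (m.real Gᶜ) = Real.exp (-m.real G) := by
    rw [← Real.exp_add, measureReal_compl hG]
    congr 1
    ring
  have indicator_le_one (n : ℕ) : |if k ≤ n then (1 : ℝ) else 0| ≤ 1 := by
    split_ifs <;> simp
  have formula := h.integral_card_filter_mul_prod hG hw hw1 indicator_le_one
  rw [tsum_ite_mul_pow_div_factorial, integral_compl, mul_left_comm, exp_mul_exp,
    mul_comm] at formula
  simpa only [boole_mul] using formula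

lemma tendsto_pow_mul_integral_ite_card_filter_mul_prod {ι : Type*} {l : Filter ι}
    {b : ι → ℝ} (hb : Tendsto b l atTop) {Ω : ι → Type*} [∀ i, MeasurableSpace (Ω i)]
    {P : ∀ i, Measure (Ω i)} [∀ i, IsFiniteMeasure (P i)] {m : ι → Measure α}
    [∀ i, IsFiniteMeasure (m i)] {N : ∀ i, Ω i → ℕ} {Z : ∀ i, ℕ → Ω i → α}
    (h : ∀ i, IsPoissonSample (P i) (m i) (N i) (Z i)) {G : Set α} [DecidablePred (· ∈ G)]
    (hG : MeasurableSet G) {w : α → ℝ} (hw : Measurable w) (hw1 : ∀ x, |w x| ≤ 1)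
    (hwG : ∀ x ∉ G, w x = 1) {M L : ℝ} (hM : Tendsto (fun i ↦ b i * (m i).real G) l (𝓝 M))
    (hL : Tendsto (fun i ↦ b i * ∫ x in G, w x ∂m i) l (𝓝 L)) (k : ℕ) :
    Tendsto (fun i ↦ b i ^ k * ∫ ω,
        (if k ≤ Finset.card {j ∈ Finset.range (N i ω) | Z i j ω ∈ G} then
          ∏ j ∈ Finset.range (N i ω), w (Z i j ω) else 0) ∂P i) l
      (𝓝 ((k ! : ℝ)⁻¹ * L ^ k)) := by
  have void_prob : Tendsto (fun i ↦ Real.exp (-(m i).real G)) l (𝓝 1) := by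
    simpa using (tendsto_zero_of_tendsto_mul_atTop hb hM).neg.rexp
  simp_rw [fun i ↦ (h i).integral_ite_card_filter_mul_prod hG hw hw1 hwG k,
    mul_left_comm (b _ ^ k)]
  simpa only [one_mul] using void_prob.mul (tendsto_pow_mul_exp_sub_sum_range hb hL k)

end IsPoissonSample

section Marks

variable {T X : Type*} [MeasurableSpace T] [MeasurableSpace X]

lemma eq_smul_pi_prod {ι : Type*} [Fintype ι] {lam : Measure T} [IsFiniteMeasure lam]
    {ν : Measure X} [IsFiniteMeasure ν] {κ : Measure (ι → T × X)} {c : ENNReal} (hc : c ≠ 0)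
    (hc' : c ≠ ⊤)
    (hκ : ∀ (A : ι → Set T) (B : ι → Set X), (∀ i, MeasurableSet (A i)) →
      (∀ i, MeasurableSet (B i)) →
      κ (Set.univ.pi fun i ↦ A i ×ˢ B i) = c * ∏ i, (lam (A i) * ν (B i))) :
    κ = c • Measure.pi fun _ ↦ lam.prod ν := by
  have pi_eq : (Measure.pi fun _ : ι ↦ lam.prod ν) = c⁻¹ • κ := by
    refine Measure.pi_eq_generateFrom
      (C := fun _ ↦ Set.image2 (· ×ˢ ·) {A | MeasurableSet A} {B | MeasurableSet B})
      (fun _ ↦ generateFrom_prod) (fun _ ↦ isPiSystem_prod)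
      (fun _ ↦ ⟨fun _ ↦ Set.univ, fun _ ↦ ⟨_, .univ, _, .univ, Set.univ_prod_univ⟩,
        fun _ ↦ measure_lt_top _ _, Set.iUnion_const _⟩) fun S hS ↦ ?_
    choose A hA B hB hAB using hS
    obtain rfl : (fun i ↦ A i ×ˢ B i) = S := funext hAB
    simp only [Measure.smul_apply, smul_eq_mul, hκ A B hA hB, Measure.prod_prod]
    rw [← mul_assoc, ENNReal.inv_mul_cancel hc hc', one_mul]
  rw [pi_eq, smul_smul, ENNReal.mul_inv_cancel hc hc', one_smul]

lemma measure_inter_preimage_pi_prod_of_range {Ω : Type*} [MeasurableSpace Ω] {P : Measure Ω}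
    {Y : ℕ → Ω → T} {Z : ℕ → Ω → X} {E : Set Ω} {j : ℕ}
    (h : ∀ (A : ℕ → Set T) (B : ℕ → Set X), (∀ i, MeasurableSet (A i)) →
      (∀ i, MeasurableSet (B i)) →
      P (E ∩ ⋂ i ∈ Finset.range j, ({ω | Y i ω ∈ A i} ∩ {ω | Z i ω ∈ B i}))
        = P E * ∏ i ∈ Finset.range j, (P {ω | Y i ω ∈ A i} * P {ω | Z i ω ∈ B i}))
    {A : Fin j → Set T} {B : Fin j → Set X} (hA : ∀ i, MeasurableSet (A i))
    (hB : ∀ i, MeasurableSet (B i)) :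
    P (E ∩ (fun ω (i : Fin j) ↦ (Y i ω, Z i ω)) ⁻¹' Set.univ.pi fun i ↦ A i ×ˢ B i)
      = P E * ∏ i : Fin j, (P {ω | Y i ω ∈ A i} * P {ω | Z i ω ∈ B i}) := by
  let A' (i : ℕ) : Set T := if hi : i < j then A ⟨i, hi⟩ else Set.univ
  let B' (i : ℕ) : Set X := if hi : i < j then B ⟨i, hi⟩ else Set.univ
  have hA' (i : ℕ) : MeasurableSet (A' i) := by
    by_cases hi : i < j <;> simp [A', hi, hA]
  have hB' (i : ℕ) : MeasurableSet (B' i) := by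
    by_cases hi : i < j <;> simp [B', hi, hB]
  have box_eq : (fun ω (i : Fin j) ↦ (Y i ω, Z i ω)) ⁻¹' Set.univ.pi (fun i ↦ A i ×ˢ B i)
      = ⋂ i ∈ Finset.range j, ({ω | Y i ω ∈ A' i} ∩ {ω | Z i ω ∈ B' i}) := by
    ext ω
    simp +contextual [Fin.forall_iff, A', B']
  rw [box_eq, h A' B' hA' hB', Finset.prod_range]
  simp [A', B']

lemma isPoissonSample_prodMk {Ω : Type*} [MeasurableSpace Ω] {P : Measure Ω} {N : Ω → ℕ}
    {Y : ℕ → Ω → T} {Z : ℕ → Ω → X} {lam : Measure T} [IsFiniteMeasure lam] (hlam : lam ≠ 0)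
    {ν : Measure X} [IsProbabilityMeasure ν] (hN : Measurable N) (hY : ∀ i, Measurable (Y i))
    (hZ : ∀ i, Measurable (Z i))
    (hNlaw : ∀ j, P {ω | N ω = j} =
      ENNReal.ofReal (Real.exp (-lam.real Set.univ) * lam.real Set.univ ^ j / j !))
    (hYlaw : ∀ i, P.map (Y i) = (lam Set.univ)⁻¹ • lam) (hZlaw : ∀ i, P.map (Z i) = ν)
    (hindep : ∀ (j : ℕ) (A : ℕ → Set T) (B : ℕ → Set X), (∀ i, MeasurableSet (A i)) →
      (∀ i, MeasurableSet (B i)) →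
      P ({ω | N ω = j} ∩ ⋂ i ∈ Finset.range j, ({ω | Y i ω ∈ A i} ∩ {ω | Z i ω ∈ B i}))
        = P {ω | N ω = j} *
          ∏ i ∈ Finset.range j, (P {ω | Y i ω ∈ A i} * P {ω | Z i ω ∈ B i})) :
    IsPoissonSample P (lam.prod ν) N fun i ω ↦ (Y i ω, Z i ω) where
  measurable_count := hN
  measurable_point i := (hY i).prodMk (hZ i)
  map_restrict j := by
    have measurable_points : Measurable fun ω (i : Fin j) ↦ (Y i ω, Z i ω) :=
      measurable_pi_lambda _ fun i ↦ (hY i).prodMk (hZ i)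
    have count_law : P {ω | N ω = j} = ENNReal.ofReal (Real.exp (-lam.real Set.univ) / j !)
        * lam Set.univ ^ j := by
      rw [hNlaw, mul_div_right_comm, ENNReal.ofReal_mul (by positivity),
        ENNReal.ofReal_pow measureReal_nonneg, ofReal_measureReal]
    have mark_law (i : ℕ) {A : Set T} (hA : MeasurableSet A) :
        P {ω | Y i ω ∈ A} = (lam Set.univ)⁻¹ * lam A := by
      rw [← smul_eq_mul, ← Measure.smul_apply, ← hYlaw i]
      exact (Measure.map_apply (hY i) hA).symm
    have value_law (i : ℕ) {B : Set X} (hB : MeasurableSet B) : P {ω | Z i ω ∈ B} = ν B := by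
      rw [← hZlaw i]
      exact (Measure.map_apply (hZ i) hB).symm
    have mass_cancel : lam Set.univ ^ j * (lam Set.univ)⁻¹ ^ j = 1 := by
      rw [← mul_pow, ENNReal.mul_inv_cancel (by simpa using hlam) (measure_ne_top _ _), one_pow]
    rw [← Set.univ_prod_univ, measureReal_prod_prod, probReal_univ (μ := ν), mul_one]
    refine eq_smul_pi_prod (ENNReal.ofReal_pos.2 (by positivity)).ne' ENNReal.ofReal_ne_top
      fun A B hA hB ↦ ?_
    have hbox := MeasurableSet.univ_pi fun i ↦ (hA i).prod (hB i)
    rw [Measure.map_apply measurable_points hbox,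
      Measure.restrict_apply (measurable_points hbox), Set.inter_comm,
      measure_inter_preimage_pi_prod_of_range (hindep j) hA hB, count_law, mul_assoc]
    simp_rw [mark_law _ (hA _), value_law _ (hB _), mul_assoc]
    rw [Finset.prod_mul_distrib, Finset.prod_const, Finset.card_univ, Fintype.card_fin,
      ← mul_assoc (_ ^ j), mass_cancel, one_mul]

end Marks

section FiniteMeasure

variable {ι X : Type*} {l : Filter ι} [MeasurableSpace X]

lemma tendsto_finiteMeasure_apply_of_null_frontier [TopologicalSpace X] [OpensMeasurableSpace X]
    [HasOuterApproxClosed X] {κ : ι → FiniteMeasure X} {κ' : FiniteMeasure X}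
    (h : Tendsto κ l (𝓝 κ')) {G : Set X} (hG : κ' (frontier G) = 0) :
    Tendsto (fun i ↦ κ i G) l (𝓝 (κ' G)) := by
  rcases eq_or_ne κ' 0 with rfl | hκ'
  · have mass_tendsto := h.mass
    rw [FiniteMeasure.zero_mass] at mass_tendsto
    exact tendsto_of_tendsto_of_tendsto_of_le_of_le tendsto_const_nhds mass_tendsto
      (fun _ ↦ zero_le) fun i ↦ (κ i).apply_le_mass G
  · have : Nonempty X := by
      contrapose! hκ'
      exact Subtype.ext (Measure.eq_zero_of_isEmpty _)
    have normalized_tendsto : Tendsto (fun i ↦ (κ i).normalize G) l (𝓝 (κ'.normalize G)) := by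
      refine ProbabilityMeasure.tendsto_measure_of_null_frontier_of_tendsto
        (FiniteMeasure.tendsto_normalize_of_tendsto h hκ') ?_
      rw [FiniteMeasure.normalize_eq_of_nonzero _ hκ', hG, mul_zero]
    simp_rw [FiniteMeasure.self_eq_mass_mul_normalize _ G]
    exact h.mass.mul normalized_tendsto

variable {m : Measure X} {v : X → ℝ}

lemma withDensity_ofReal_real_apply (hv : Measurable v) (hv0 : ∀ x, 0 ≤ v x) {G : Set X}
    (hG : MeasurableSet G) :
    (m.withDensity fun x ↦ ENNReal.ofReal (v x)).real G = ∫ x in G, v x ∂m := by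
  rw [measureReal_def, withDensity_apply _ hG,
    integral_eq_lintegral_of_nonneg_ae (ae_of_all _ hv0) hv.aestronglyMeasurable]

lemma integral_withDensity_ofReal (hv : Measurable v) (hv0 : ∀ x, 0 ≤ v x) (g : X → ℝ) :
    ∫ x, g x ∂m.withDensity (fun x ↦ ENNReal.ofReal (v x)) = ∫ x, v x * g x ∂m := by
  rw [integral_withDensity_eq_integral_toReal_smul hv.ennreal_ofReal
    (ae_of_all _ fun _ ↦ ENNReal.ofReal_lt_top)]
  simp_rw [ENNReal.toReal_ofReal (hv0 _), smul_eq_mul]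

end FiniteMeasure

/-- Convergence `m i → μ` in `M(X ∖ {x₀})`, the space of measures that are finite away from `x₀`,
tested against bounded continuous functions vanishing near `x₀`. Regular variation of `ν` is the
case where `m n` is the image of `n • ν` under scaling by `(a n)⁻¹`. -/
structure TendstoAwayFrom_s12 {ι X : Type*} [PseudoMetricSpace X] [MeasurableSpace X] (x₀ : X)
    (m : ι → Measure X) (l : Filter ι) (μ : Measure X) : Prop where
  measure_ne_top : ∀ ρ > (0 : ℝ), μ {x | ρ ≤ dist x₀ x} ≠ ⊤
  tendsto_integral : ∀ h : X → ℝ, Continuous h → (∃ C, ∀ x, |h x| ≤ C) →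
    (∃ ρ > (0 : ℝ), ∀ x, dist x₀ x < ρ → h x = 0) →
    Tendsto (fun i ↦ ∫ x, h x ∂m i) l (𝓝 (∫ x, h x ∂μ))

lemma tendstoAwayFrom_smul_map {ι X Y : Type*} [PseudoMetricSpace X] [MeasurableSpace X]
    [OpensMeasurableSpace X] [MeasurableSpace Y] {x₀ : X} {l : Filter ι} {b : ι → ℝ≥0}
    {ν : Measure Y} {g : ι → Y → X} (hg : ∀ i, Measurable (g i)) {μ : Measure X}
    (hμ : ∀ ρ > (0 : ℝ), μ {x | ρ ≤ dist x₀ x} ≠ ⊤)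
    (h : ∀ u : X → ℝ, Continuous u → (∃ C, ∀ x, |u x| ≤ C) →
      (∃ ρ > (0 : ℝ), ∀ x, dist x₀ x < ρ → u x = 0) →
      Tendsto (fun i ↦ b i * ∫ y, u (g i y) ∂ν) l (𝓝 (∫ x, u x ∂μ))) :
    TendstoAwayFrom_s12 x₀ (fun i ↦ b i • ν.map (g i)) l μ := by
  refine ⟨hμ, fun u hu hub huv ↦ (h u hu hub huv).congr fun i ↦ ?_⟩
  rw [integral_smul_nnreal_measure, NNReal.smul_def, smul_eq_mul,
    integral_map (hg i).aemeasurable hu.measurable.aestronglyMeasurable]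

namespace TendstoAwayFrom_s12

variable {ι X : Type*} {l : Filter ι} [PseudoMetricSpace X] [MeasurableSpace X] [BorelSpace X]
  {x₀ : X} {m : ι → Measure X} {μ : Measure X}

lemma integrable (h : TendstoAwayFrom_s12 x₀ m l μ) {v : X → ℝ} (hv : Continuous v) {C ρ : ℝ}
    (hvC : ∀ x, |v x| ≤ C) (hρ : 0 < ρ) (hvρ : ∀ x, dist x₀ x < ρ → v x = 0) :
    Integrable v μ := by
  have hsupp : Function.support v ⊆ {x | ρ ≤ dist x₀ x} := fun x hx ↦
    not_lt.1 fun hlt ↦ hx (hvρ x hlt)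
  rw [← integrableOn_iff_integrable_of_support_subset hsupp]
  exact Measure.integrableOn_of_bounded (h.measure_ne_top ρ hρ) hv.aestronglyMeasurable
    (ae_of_all _ hvC)

variable [∀ i, IsFiniteMeasure (m i)]

/- Weighting by `v` turns the convergence away from `x₀` into weak convergence of finite measures. -/
lemma tendsto_setIntegral_of_vanishing (h : TendstoAwayFrom_s12 x₀ m l μ) {v : X → ℝ}
    (hv : Continuous v) (hv0 : ∀ x, 0 ≤ v x) {C ρ : ℝ} (hvC : ∀ x, v x ≤ C) (hρ : 0 < ρ)
    (hvρ : ∀ x, dist x₀ x < ρ → v x = 0) {G : Set X} (hG : MeasurableSet G)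
    (hGμ : μ (frontier G) = 0) :
    Tendsto (fun i ↦ ∫ x in G, v x ∂m i) l (𝓝 (∫ x in G, v x ∂μ)) := by
  have abs_le (x : X) : |v x| ≤ C := (abs_of_nonneg (hv0 x)).trans_le (hvC x)
  have finite_density {m : Measure X} (hm : Integrable v m) :
      IsFiniteMeasure (m.withDensity fun x ↦ ENNReal.ofReal (v x)) :=
    isFiniteMeasure_withDensity_ofReal hm.2
  let κ (i : ι) : FiniteMeasure X := ⟨(m i).withDensity fun x ↦ ENNReal.ofReal (v x),
    finite_density (.of_bound hv.aestronglyMeasurable C (ae_of_all _ abs_le))⟩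
  let κ' : FiniteMeasure X := ⟨μ.withDensity fun x ↦ ENNReal.ofReal (v x),
    finite_density (h.integrable hv abs_le hρ hvρ)⟩
  have weak : Tendsto κ l (𝓝 κ') := by
    refine FiniteMeasure.tendsto_of_forall_integral_tendsto fun g ↦ ?_
    simp only [κ, κ', FiniteMeasure.toMeasure_mk,
      integral_withDensity_ofReal hv.measurable hv0]
    refine h.tendsto_integral _ (hv.mul g.continuous) ⟨C * ‖g‖, fun x ↦ ?_⟩
      ⟨ρ, hρ, fun x hx ↦ by rw [hvρ x hx, zero_mul]⟩
    rw [abs_mul]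
    exact mul_le_mul (abs_le x) (g.norm_coe_le_norm x) (abs_nonneg _)
      ((abs_nonneg _).trans (abs_le x))
  have frontier_null : κ' (frontier G) = 0 := by
    rw [FiniteMeasure.null_iff_toMeasure_null]
    exact withDensity_absolutelyContinuous _ _ hGμ
  have conv := NNReal.tendsto_coe.2
    (tendsto_finiteMeasure_apply_of_null_frontier weak frontier_null)
  simp_rw [← withDensity_ofReal_real_apply hv.measurable hv0 hG]
  exact conv

lemma tendsto_setIntegral (h : TendstoAwayFrom_s12 x₀ m l μ) {u : X → ℝ} (hu : Continuous u)
    (hu0 : ∀ x, 0 ≤ u x) {C ρ : ℝ} (huC : ∀ x, u x ≤ C) (hρ : 0 < ρ) {G : Set X}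
    (hG : MeasurableSet G) (hGρ : ∀ x ∈ G, ρ ≤ dist x₀ x) (hGμ : μ (frontier G) = 0) :
    Tendsto (fun i ↦ ∫ x in G, u x ∂m i) l (𝓝 (∫ x in G, u x ∂μ)) := by
  obtain ⟨ψ, hψ0, hψ1, hψ⟩ := exists_continuous_zero_one_of_isClosed
    (isClosed_le (continuous_const.dist continuous_id) continuous_const :
      IsClosed {x | dist x₀ x ≤ ρ / 2})
    (isClosed_le continuous_const (continuous_const.dist continuous_id) :
      IsClosed {x | ρ ≤ dist x₀ x})
    (Set.disjoint_left.2 fun x hx hx' ↦ (half_lt_self hρ).not_ge (hx'.trans hx))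
  have cutoff_eq (m : Measure X) : ∫ x in G, u x * ψ x ∂m = ∫ x in G, u x ∂m :=
    setIntegral_congr_fun hG fun x hx ↦ by simp [hψ1 (hGρ x hx)]
  have conv := h.tendsto_setIntegral_of_vanishing (v := fun x ↦ u x * ψ x)
    (hu.mul ψ.continuous) (fun x ↦ mul_nonneg (hu0 x) (hψ x).1)
    (fun x ↦ (mul_le_of_le_one_right (hu0 x) (hψ x).2).trans (huC x)) (half_pos hρ)
    (fun x hx ↦ by simp [hψ0 (show x ∈ {x | dist x₀ x ≤ ρ / 2} from hx.le)]) hG hGμ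
  simpa only [cutoff_eq] using conv

lemma tendsto_measureReal (h : TendstoAwayFrom_s12 x₀ m l μ) {ρ : ℝ} (hρ : 0 < ρ) {G : Set X}
    (hG : MeasurableSet G) (hGρ : ∀ x ∈ G, ρ ≤ dist x₀ x) (hGμ : μ (frontier G) = 0) :
    Tendsto (fun i ↦ (m i).real G) l (𝓝 (μ.real G)) := by
  simpa using h.tendsto_setIntegral (u := fun _ ↦ 1) continuous_const (fun _ ↦ zero_le_one)
    (fun _ ↦ le_rfl) hρ hG hGρ hGμ

lemma tendsto_setIntegral_prod [l.IsCountablyGenerated] [SFinite μ] {T : Type*}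
    [MeasurableSpace T] (h : TendstoAwayFrom_s12 x₀ m l μ) (lam : Measure T) [IsFiniteMeasure lam]
    {w : T × X → ℝ} (hwm : Measurable w) (hw : ∀ t, Continuous fun x ↦ w (t, x))
    (hw0 : ∀ z, 0 ≤ w z) {C ρ : ℝ} (hwC : ∀ z, w z ≤ C) (hρ : 0 < ρ) {G : Set X}
    (hG : MeasurableSet G) (hGρ : ∀ x ∈ G, ρ ≤ dist x₀ x) (hGμ : μ (frontier G) = 0) :
    Tendsto (fun i ↦ ∫ z in Prod.snd ⁻¹' G, w z ∂lam.prod (m i)) l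
      (𝓝 (∫ z in Prod.snd ⁻¹' G, w z ∂lam.prod μ)) := by
  have norm_le (z : T × X) : ‖w z‖ ≤ C := (Real.norm_of_nonneg (hw0 z)).trans_le (hwC z)
  have fubini {m : Measure X} [SFinite m] (hm : m G ≠ ⊤) :
      ∫ z in Prod.snd ⁻¹' G, w z ∂lam.prod m = ∫ t, ∫ x in G, w (t, x) ∂m ∂lam := by
    have : IsFiniteMeasure (m.restrict G) := isFiniteMeasure_restrict.2 hm
    rw [← Set.univ_prod, ← Measure.prod_restrict, Measure.restrict_univ, integral_prod]
    exact .of_bound hwm.aestronglyMeasurable C (ae_of_all _ norm_le)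
  have bound : ∀ᶠ i in l, ∀ t, ‖∫ x in G, w (t, x) ∂m i‖ ≤ C * μ.real G + 1 := by
    filter_upwards [((h.tendsto_measureReal hρ hG hGρ hGμ).const_mul C).eventually_lt_const
      (lt_add_one _)] with i hi t
    exact (norm_setIntegral_le_of_norm_le_const (measure_lt_top _ _) fun x _ ↦
      norm_le (t, x)).trans hi.le
  rw [fubini (measure_ne_top_of_subset hGρ (h.measure_ne_top ρ hρ))]
  simp_rw [fun i ↦ fubini (MeasureTheory.measure_ne_top (m i) G)]
  refine tendsto_integral_filter_of_dominated_convergence _ (.of_forall fun i ↦ ?_)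
    (bound.mono fun i hi ↦ ae_of_all _ hi) (integrable_const _) (ae_of_all _ fun t ↦ ?_)
  · exact hwm.stronglyMeasurable.integral_prod_right'.aestronglyMeasurable
  · exact h.tendsto_setIntegral (hw t) (fun x ↦ hw0 (t, x)) (fun x ↦ hwC (t, x)) hρ hG hGρ hGμ

end TendstoAwayFrom_s12

lemma sFinite_of_forall_measure_le_dist_ne_top {X : Type*} [MetricSpace X] [MeasurableSpace X]
    [BorelSpace X] {x₀ : X} {μ : Measure X}
    (hμ : ∀ ρ > (0 : ℝ), μ {x | ρ ≤ dist x₀ x} ≠ ⊤) : SFinite μ := by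
  let S (n : ℕ) : Set X := {x | 1 / ((n : ℝ) + 1) ≤ dist x₀ x}
  have compl_eq : ({x₀}ᶜ : Set X) = ⋃ n, S n := by
    ext x
    rw [Set.mem_compl_singleton_iff, Set.mem_iUnion, ne_comm, ← dist_pos]
    exact ⟨fun hx ↦ (exists_nat_one_div_lt hx).imp fun _ ↦ le_of_lt,
      fun ⟨_, hn⟩ ↦ Nat.one_div_pos_of_nat.trans_le hn⟩
  have sFinite_piece (n : ℕ) : SFinite (μ.restrict (S n)) :=
    have : IsFiniteMeasure (μ.restrict (S n)) :=
      isFiniteMeasure_restrict.2 (hμ _ Nat.one_div_pos_of_nat)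
    inferInstance
  have sFinite_singleton : SFinite (μ.restrict {x₀}) := by
    rw [Measure.restrict_singleton]
    infer_instance
  have sFinite_compl : SFinite (μ.restrict {x₀}ᶜ) := by
    rw [compl_eq]
    exact sFinite_of_absolutelyContinuous Measure.restrict_iUnion_le.absolutelyContinuous
  rw [← Measure.restrict_add_restrict_compl (μ := μ) (measurableSet_singleton x₀)]
  infer_instance

theorem stmt_12_general {ι T X : Type*} {l : Filter ι} [l.IsCountablyGenerated]
    [MeasurableSpace T] [PseudoMetricSpace X] [MeasurableSpace X] [BorelSpace X] {x₀ : X}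
    {lam : Measure T} [IsFiniteMeasure lam] {b : ι → ℝ≥0} (hb : Tendsto b l atTop)
    {ν : ι → Measure X} [∀ i, IsFiniteMeasure (ν i)] {μ : Measure X} [SFinite μ]
    (hν : TendstoAwayFrom_s12 x₀ (fun i ↦ b i • ν i) l μ)
    {Ω : ι → Type*} [∀ i, MeasurableSpace (Ω i)] {P : ∀ i, Measure (Ω i)}
    [∀ i, IsFiniteMeasure (P i)] {N : ∀ i, Ω i → ℕ} {Z : ∀ i, ℕ → Ω i → T × X}
    (hZ : ∀ i, IsPoissonSample (P i) (lam.prod (ν i)) (N i) (Z i))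
    {G : Set X} [DecidablePred (· ∈ G)] (hG : MeasurableSet G) {ρ : ℝ} (hρ : 0 < ρ)
    (hGρ : ∀ x ∈ G, ρ ≤ dist x₀ x) (hGμ : μ (frontier G) = 0)
    {f : T × X → ℝ} (hfm : Measurable f) (hfc : ∀ t, Continuous fun x ↦ f (t, x))
    (hf0 : ∀ z, 0 ≤ f z) (hfG : ∀ t, ∀ x ∉ G, f (t, x) = 0) (k : ℕ) :
    Tendsto (fun i ↦ (b i : ℝ) ^ k * ∫ ω,
        (if k ≤ Finset.card {j ∈ Finset.range (N i ω) | (Z i j ω).2 ∈ G} then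
          Real.exp (-∑ j ∈ Finset.range (N i ω), f (Z i j ω)) else 0) ∂P i) l
      (𝓝 ((k ! : ℝ)⁻¹ * ∫ z : Fin k → T × X, Real.exp (-∑ j, f (z j))
        * ∏ j, (if (z j).2 ∈ G then 1 else 0) ∂Measure.pi fun _ ↦ lam.prod μ)) := by
  have hw1 (z : T × X) : Real.exp (-f z) ≤ 1 := Real.exp_le_one_iff.2 (neg_nonpos.2 (hf0 z))
  have scaled_integral (i : ι) (w : T × X → ℝ) :
      ∫ z in Prod.snd ⁻¹' G, w z ∂lam.prod (b i • ν i)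
        = b i * ∫ z in Prod.snd ⁻¹' G, w z ∂lam.prod (ν i) := by
    rw [Measure.prod_smul_right, Measure.restrict_smul, integral_smul_nnreal_measure,
      NNReal.smul_def, smul_eq_mul]
  have mass_tendsto := hν.tendsto_setIntegral_prod lam (w := fun _ ↦ 1) measurable_const
    (fun _ ↦ continuous_const) (fun _ ↦ zero_le_one) (fun _ ↦ le_rfl) hρ hG hGρ hGμ
  have laplace_tendsto := hν.tendsto_setIntegral_prod lam hfm.neg.exp
    (fun t ↦ (hfc t).neg.rexp) (fun _ ↦ Real.exp_nonneg _) hw1 hρ hG hGρ hGμ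
  simp_rw [scaled_integral] at mass_tendsto laplace_tendsto
  simp_rw [setIntegral_const, smul_eq_mul, mul_one] at mass_tendsto
  have : SigmaFinite ((lam.prod μ).restrict (Prod.snd ⁻¹' G)) := by
    have : IsFiniteMeasure (μ.restrict G) :=
      isFiniteMeasure_restrict.2 (measure_ne_top_of_subset hGρ (hν.measure_ne_top ρ hρ))
    rw [← Set.univ_prod, ← Measure.prod_restrict]
    infer_instance
  let _ : DecidablePred (· ∈ (Prod.snd ⁻¹' G : Set (T × X))) := fun z ↦
    inferInstanceAs (Decidable (z.2 ∈ G))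
  have limit_eq : ∫ z : Fin k → T × X, Real.exp (-∑ j, f (z j))
        * ∏ j, (if (z j).2 ∈ G then 1 else 0) ∂Measure.pi (fun _ ↦ lam.prod μ)
      = (∫ z in Prod.snd ⁻¹' G, Real.exp (-f z) ∂lam.prod μ) ^ k :=
    (integral_pi_exp_neg_sum_mul_prod_ite (measurable_snd hG) f).trans (by rw [Fintype.card_fin])
  rw [limit_eq]
  simp_rw [← Finset.sum_neg_distrib, Real.exp_sum]
  exact IsPoissonSample.tendsto_pow_mul_integral_ite_card_filter_mul_prod
    (NNReal.tendsto_coe_atTop.2 hb) hZ (measurable_snd hG) hfm.neg.exp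
    (fun z ↦ (abs_of_nonneg (Real.exp_nonneg _)).trans_le (hw1 z))
    (fun z hz ↦ by simp [hfG z.1 z.2 hz]) mass_tendsto laplace_tendsto k

/-- Hidden regular variation of marked Poisson point processes, truncated
Laplace-functional form (Theorem 3.1 of the paper, case `k ≥ 0`). -/
theorem stmt_12
    {T : Type*} [MetricSpace T] [CompleteSpace T] [TopologicalSpace.SeparableSpace T]
    [MeasurableSpace T] [BorelSpace T]
    {X : Type*} [MetricSpace X] [CompleteSpace X] [TopologicalSpace.SeparableSpace X]
    [MeasurableSpace X] [BorelSpace X]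
    (x0 : X) (σ : ℝ → X → X)
    (hσc : ContinuousOn (fun p : ℝ × X => σ p.1 p.2) (Set.Ioi (0 : ℝ) ×ˢ Set.univ))
    (hσ1 : ∀ x, σ 1 x = x)
    (hσm : ∀ u v : ℝ, 0 < u → 0 < v → ∀ x, σ u (σ v x) = σ (u * v) x)
    (hσ0 : ∀ u : ℝ, 0 < u → σ u x0 = x0)
    (lam : Measure T) [IsFiniteMeasure lam] (hlam0 : lam ≠ 0)
    (ν : Measure X) [IsProbabilityMeasure ν] (hν0 : ν {x0} = 0)
    (a : ℕ → ℝ) (ha : ∀ n, 0 < a n) (haTop : Tendsto a atTop atTop)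
    (μ : Measure X) (hμ0 : μ ≠ 0)
    (hμFin : ∀ ρ > (0 : ℝ), μ {x | ρ ≤ dist x0 x} ≠ ⊤)
    (hRV : ∀ h : X → ℝ, Continuous h → (∃ C, ∀ x, |h x| ≤ C) →
      (∃ ρ > (0 : ℝ), ∀ x, dist x0 x < ρ → h x = 0) →
      Tendsto (fun n : ℕ => (n : ℝ) * ∫ x, h (σ (a n)⁻¹ x) ∂ν) atTop (𝓝 (∫ x, h x ∂μ)))
    {Ω : Type*} [MeasurableSpace Ω] (P : Measure Ω) [IsProbabilityMeasure P]
    (N : Ω → ℕ) (hNmeas : Measurable N)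
    (Tt : ℕ → Ω → T) (hTmeas : ∀ i, Measurable (Tt i))
    (Xx : ℕ → Ω → X) (hXmeas : ∀ i, Measurable (Xx i))
    (hNlaw : ∀ j : ℕ, P {ω | N ω = j} =
      ENNReal.ofReal (Real.exp (-(lam Set.univ).toReal) * (lam Set.univ).toReal ^ j /
        (Nat.factorial j : ℝ)))
    (hTlaw : ∀ i, Measure.map (Tt i) P = (lam Set.univ)⁻¹ • lam)
    (hXlaw : ∀ i, Measure.map (Xx i) P = ν)
    (hIndep : ∀ (j n : ℕ) (A : ℕ → Set T) (B : ℕ → Set X),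
      (∀ i, MeasurableSet (A i)) → (∀ i, MeasurableSet (B i)) →
      P ({ω | N ω = j} ∩ ⋂ i ∈ Finset.range n, ({ω | Tt i ω ∈ A i} ∩ {ω | Xx i ω ∈ B i}))
        = P {ω | N ω = j} *
          ∏ i ∈ Finset.range n, (P {ω | Tt i ω ∈ A i} * P {ω | Xx i ω ∈ B i}))
    (k : ℕ) (r : ℝ) (hr : 0 < r) (hrcont : μ {x | dist x0 x = r} = 0)
    (f : T × X → ℝ) (hfc : Continuous f) (hf0 : ∀ z, 0 ≤ f z) (hfb : ∃ C, ∀ z, f z ≤ C)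
    (hfvan : ∀ t x, dist x0 x < r → f (t, x) = 0) :
    Tendsto (fun n : ℕ => (n : ℝ) ^ (k + 1) *
        ∫ ω, (if k + 1 ≤ ((Finset.range (N ω)).filter
              (fun i => r ≤ dist x0 (σ (a n)⁻¹ (Xx i ω)))).card then
            Real.exp (-∑ i ∈ Finset.range (N ω), f (Tt i ω, σ (a n)⁻¹ (Xx i ω)))
          else 0) ∂P)
      atTop
      (𝓝 ((Nat.factorial (k + 1) : ℝ)⁻¹ *
        ∫ z : Fin (k + 1) → T × X,
          (Real.exp (-∑ j, f (z j)) * ∏ j, (if r ≤ dist x0 (z j).2 then (1 : ℝ) else 0))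
          ∂(Measure.pi fun _ : Fin (k + 1) => lam.prod μ))) := by
  have := UniformSpace.secondCountable_of_separable T
  have := UniformSpace.secondCountable_of_separable X
  have : SFinite μ := sFinite_of_forall_measure_le_dist_ne_top hμFin
  have measurable_scale (n : ℕ) : Measurable (σ (a n)⁻¹) :=
    (hσc.comp_continuous (.prodMk_right _) fun x ↦ ⟨inv_pos.2 (ha n), Set.mem_univ x⟩).measurable
  have sample := isPoissonSample_prodMk hlam0 hNmeas hTmeas hXmeas hNlaw hTlaw hXlaw
    fun j ↦ hIndep j j
  have continuous_dist : Continuous (dist x0) := continuous_const.dist continuous_id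
  exact stmt_12_general (G := {x | r ≤ dist x0 x}) tendsto_natCast_atTop_atTop
    (tendstoAwayFrom_smul_map measurable_scale hμFin hRV)
    (fun n ↦ sample.map_prodMk_right (measurable_scale n))
    (isClosed_le continuous_const continuous_dist).measurableSet hr (fun _ ↦ id)
    (measure_mono_null (frontier_le_subset_eq continuous_const continuous_dist)
      (by simpa only [eq_comm] using hrcont))
    hfc.measurable (fun t ↦ hfc.comp (.prodMk_right t)) hf0
    (fun t x hx ↦ hfvan t x (not_le.1 hx)) (k + 1)
end
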